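/- arXiv:1904.11916 — 7 statements merged into one kernel-verified Lean document; each statement's English description precedes it below -/
import Mathlib

section
/- Let F > 0 and c > 0 be real constants and let λ_n, u_n, g be real numbers. Set b := F·(−λ_n + c·(u_n − g)). Then −λ_n − (1/F)·max{0, b} = 0 if and only if the three nonpenetration conditions hold: u_n − g ≤ 0, λ_n·(u_n − g) = 0, and λ_n ≤ 0. -/
/-!
Since `F > 0`, the factor `F` can be pulled out of the maximum, and
`a - max 0 (a + d) = min a (-d)` turns the complementary function into
`min (-λ_n) (-c * (u_n - g))`. The minimum of two elements vanishes exactly when both are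
nonnegative and their product is zero.
-/

theorem min_eq_zero_iff_nonneg_and_mul_eq_zero {M : Type*} [MulZeroClass M] [NoZeroDivisors M]
    [LinearOrder M] {a b : M} : min a b = 0 ↔ 0 ≤ a ∧ 0 ≤ b ∧ a * b = 0 := by
  rw [min_eq_iff, mul_eq_zero]
  constructor
  · rintro (⟨rfl, hb⟩ | ⟨rfl, ha⟩)
    · exact ⟨le_rfl, hb, .inl rfl⟩
    · exact ⟨ha, le_rfl, .inr rfl⟩
  · rintro ⟨ha, hb, rfl | rfl⟩
    · exact .inl ⟨rfl, hb⟩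
    · exact .inr ⟨rfl, ha⟩

theorem sub_max_zero_add_eq_min_neg {G : Type*} [AddCommGroup G] [LinearOrder G]
    [IsOrderedAddMonoid G] (a d : G) : a - max 0 (a + d) = min a (-d) := by
  rw [← min_sub_sub_left, sub_zero, sub_add_cancel_left]

theorem inv_mul_max_zero_mul {G₀ : Type*} [GroupWithZero G₀] [LinearOrder G₀] [PosMulStrictMono G₀]
    {r : G₀} (hr : 0 < r) (x : G₀) : r⁻¹ * max 0 (r * x) = max 0 x := by
  rw [(monotone_mul_left_of_nonneg (inv_nonneg.mpr hr.le)).map_max, mul_zero,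
    inv_mul_cancel_left₀ hr.ne']

theorem complementary_function_iff_nonpenetration_general {K : Type*} [Field K] [LinearOrder K]
    [IsStrictOrderedRing K] {F c : K} (lamn un g : K) (hF : 0 < F) (hc : 0 < c) :
    -lamn - (1 / F) * max 0 (F * (-lamn + c * (un - g))) = 0 ↔
      un - g ≤ 0 ∧ lamn * (un - g) = 0 ∧ lamn ≤ 0 := by
  have gap_sign : 0 ≤ -(c * (un - g)) ↔ un - g ≤ 0 := by
    rw [← mul_neg, mul_nonneg_iff_of_pos_left hc, neg_nonneg]
  have complementarity : -lamn * -(c * (un - g)) = 0 ↔ lamn * (un - g) = 0 := by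
    rw [neg_mul_neg, mul_left_comm, mul_eq_zero_iff_left hc.ne']
  rw [one_div, inv_mul_max_zero_mul hF, sub_max_zero_add_eq_min_neg,
    min_eq_zero_iff_nonneg_and_mul_eq_zero, neg_nonneg, gap_sign, complementarity, and_comm,
    and_assoc]

/-- The nonlinear complementary function `C_n` vanishes if and only if the three
nonpenetration contact conditions hold. -/
theorem complementary_function_iff_nonpenetration
    (F c lamn un g : ℝ) (hF : 0 < F) (hc : 0 < c) :
    (-lamn - (1 / F) * max 0 (F * (-lamn + c * (un - g))) = 0) ↔
      (un - g ≤ 0 ∧ lamn * (un - g) = 0 ∧ lamn ≤ 0) :=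
  complementary_function_iff_nonpenetration_general lamn un g hF hc
end

section
/- Let n ≥ 1, let ℝⁿ carry the Euclidean norm ‖·‖, and let F > 0, c > 0 be real constants. Let λ_n, u_n, g be real numbers and λ_τ, v ∈ ℝⁿ. Set b := F·(−λ_n + c·(u_n − g)), w := −λ_τ + c·v, C_n := −λ_n − (1/F)·max{0, b}, and C_τ := max{b, ‖w‖}·(−λ_τ) − max{0, b}·w. Assume the nonpenetration conditions hold: u_n − g ≤ 0, λ_n·(u_n − g) = 0, λ_n ≤ 0; and assume the Coulomb friction conditions hold: ‖λ_τ‖ ≤ F·|λ_n|; if ‖λ_τ‖ < F·|λ_n| then v = 0; and if ‖λ_τ‖ = F·|λ_n| then there exists ζ ∈ ℝ with λ_τ = −ζ²·v. Then C_n = 0 and C_τ = 0 (in ℝⁿ). -/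
/-!
Complementarity of `λ_n` and `u_n - g` makes `max 0 b` equal to the friction bound `F * |λ_n|`,
which is `C_n = 0`. As norms are nonnegative, `max b ‖w‖ = max (max 0 b) ‖w‖`, so `C_τ` depends on
`b` only through this bound. In the stick case `w = -λ_τ` lies in the ball of radius `F * |λ_n|`;
in the slip case `-λ_τ` and `w` lie on the same ray, with `‖w‖ ≥ ‖λ_τ‖ = F * |λ_n|`.
-/

theorem max_zero_add_eq_left_of_mul_eq_zero {R : Type*} [NonUnitalNonAssocSemiring R]
    [NoZeroDivisors R] [LinearOrder R] {a d : R} (ha : 0 ≤ a) (hd : d ≤ 0) (had : a * d = 0) :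
    max 0 (a + d) = a := by
  rcases mul_eq_zero.mp had with rfl | rfl
  · rw [zero_add, max_eq_left hd]
  · rw [add_zero, max_eq_right ha]

theorem max_zero_mul_neg_add_mul_eq_mul_abs {R : Type*} [CommRing R] [LinearOrder R]
    [IsStrictOrderedRing R] {F c l d : R} (hF : 0 ≤ F) (hc : 0 ≤ c) (hd : d ≤ 0) (hl : l ≤ 0)
    (hld : l * d = 0) : max 0 (F * (-l + c * d)) = F * |l| := by
  rw [abs_of_nonpos hl, mul_add]
  refine max_zero_add_eq_left_of_mul_eq_zero (mul_nonneg hF (neg_nonneg.mpr hl))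
    (mul_nonpos_of_nonneg_of_nonpos hF (mul_nonpos_of_nonneg_of_nonpos hc hd)) ?_
  linear_combination -(F ^ 2 * c) * hld

theorem sameRay_neg_of_exists_eq_neg_sq_smul {R M : Type*} [CommRing R] [LinearOrder R]
    [IsStrictOrderedRing R] [AddCommGroup M] [Module R M] {x y : M}
    (h : ∃ ζ : R, x = -(ζ ^ 2) • y) : SameRay R (-x) y := by
  obtain ⟨ζ, rfl⟩ := h
  rw [neg_smul, neg_neg]
  exact SameRay.sameRay_nonneg_smul_left y (sq_nonneg ζ)

section SeminormedSpace

variable {E : Type*} [SeminormedAddCommGroup E] [NormedSpace ℝ E]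

theorem max_norm_norm_add_smul_eq_of_sameRay {p q : E} (h : SameRay ℝ p q) :
    max ‖p‖ ‖p + q‖ • p = ‖p‖ • (p + q) := by
  have norm_le : ‖p‖ ≤ ‖p + q‖ := h.norm_add ▸ le_add_of_nonneg_right (norm_nonneg q)
  have sameRay_add : SameRay ℝ p (p + q) := (SameRay.refl p).add_right h
  rw [max_eq_right norm_le, sameRay_add.norm_smul_eq]

theorem max_norm_add_smul_eq_of_norm_le {p q : E} {s : ℝ} (hle : ‖p‖ ≤ s)
    (hstick : ‖p‖ < s → q = 0) (hslip : ‖p‖ = s → SameRay ℝ p q) :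
    max s ‖p + q‖ • p = s • (p + q) := by
  rcases hle.lt_or_eq with hlt | rfl
  · rw [hstick hlt, add_zero, max_eq_left hle]
  · exact max_norm_norm_add_smul_eq_of_sameRay (hslip rfl)

theorem contact_conditions_imply_complementary_functions_vanish_general
    {F c : ℝ} (hF : 0 < F) (hc : 0 ≤ c) {lamn un g : ℝ} {lamτ v : E}
    {b : ℝ} (hb : b = F * (-lamn + c * (un - g))) {w : E} (hw : w = -lamτ + c • v)
    (hpen1 : un - g ≤ 0) (hpen2 : lamn * (un - g) = 0) (hpen3 : lamn ≤ 0)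
    (hfric1 : ‖lamτ‖ ≤ F * |lamn|)
    (hfric2 : ‖lamτ‖ < F * |lamn| → v = 0)
    (hfric3 : ‖lamτ‖ = F * |lamn| → SameRay ℝ (-lamτ) v) :
    (-lamn - (1 / F) * max 0 b = 0) ∧
      (max b ‖w‖ • (-lamτ) - max 0 b • w = 0) := by
  have max_zero_b : max 0 b = F * |lamn| :=
    hb ▸ max_zero_mul_neg_add_mul_eq_mul_abs hF.le hc hpen1 hpen3 hpen2
  have max_b_norm : max b ‖w‖ = max (F * |lamn|) ‖w‖ := by
    rw [← max_zero_b, max_comm 0 b, max_assoc, max_eq_right (norm_nonneg w)]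
  constructor
  · rw [max_zero_b, abs_of_nonpos hpen3, one_div, inv_mul_cancel_left₀ hF.ne', sub_self]
  · rw [max_b_norm, max_zero_b, sub_eq_zero, hw]
    rw [← norm_neg lamτ] at hfric1 hfric2 hfric3
    exact max_norm_add_smul_eq_of_norm_le hfric1
      (fun hlt => by rw [hfric2 hlt, smul_zero])
      (fun heq => (hfric3 heq).nonneg_smul_right hc)

end SeminormedSpace

/-- If the nonpenetration conditions and the Coulomb friction conditions hold, then both
nonlinear complementary functions `C_n` and `C_τ` vanish. -/
theorem contact_conditions_imply_complementary_functions_vanish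
    (n : ℕ) (hn : 1 ≤ n) (F c : ℝ) (hF : 0 < F) (hc : 0 < c)
    (lamn un g : ℝ) (lamτ v : EuclideanSpace ℝ (Fin n))
    (b : ℝ) (hb : b = F * (-lamn + c * (un - g)))
    (w : EuclideanSpace ℝ (Fin n)) (hw : w = -lamτ + c • v)
    (hpen1 : un - g ≤ 0) (hpen2 : lamn * (un - g) = 0) (hpen3 : lamn ≤ 0)
    (hfric1 : ‖lamτ‖ ≤ F * |lamn|)
    (hfric2 : ‖lamτ‖ < F * |lamn| → v = 0)
    (hfric3 : ‖lamτ‖ = F * |lamn| → ∃ ζ : ℝ, lamτ = -(ζ ^ 2) • v) :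
    (-lamn - (1 / F) * max 0 b = 0) ∧
      (max b ‖w‖ • (-lamτ) - max 0 b • w = 0) := by
  exact contact_conditions_imply_complementary_functions_vanish_general hF hc.le hb hw
    hpen1 hpen2 hpen3 hfric1 hfric2 fun heq => sameRay_neg_of_exists_eq_neg_sq_smul (hfric3 heq)
end

section
/- Let n ≥ 1, let ℝⁿ carry the Euclidean norm ‖·‖, and let c > 0 be a real constant. Let b > 0 be real and λ_τ, v ∈ ℝⁿ. Set w := −λ_τ + c·v and C_τ := max{b, ‖w‖}·(−λ_τ) − max{0, b}·w. If ‖w‖ > b and C_τ = 0, then ‖λ_τ‖ = b and λ_τ = −(b·c/(‖w‖ − b))·v; in particular there exists ζ > 0 with λ_τ = −ζ·v (the sliding case, with tangential traction antiparallel to the sliding direction). -/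
theorem norm_eq_abs_of_norm_smul_eq_smul {E : Type*} [SeminormedAddCommGroup E] [NormedSpace ℝ E]
    {b : ℝ} {x w : E} (hw : ‖w‖ ≠ 0) (h : ‖w‖ • x = b • w) : ‖x‖ = |b| := by
  have norms : ‖w‖ * ‖x‖ = ‖w‖ * |b| := by
    calc ‖w‖ * ‖x‖ = ‖‖w‖ • x‖ := by rw [norm_smul, norm_norm]
      _ = ‖b • w‖ := by rw [h]
      _ = ‖w‖ * |b| := by rw [norm_smul, Real.norm_eq_abs, mul_comm]
  exact mul_left_cancel₀ hw norms

theorem eq_div_smul_of_smul_eq_smul_add {K V : Type*} [Field K] [AddCommGroup V] [Module K V]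
    {r b c : K} {x v : V} (hrb : r ≠ b) (h : r • x = b • (x + c • v)) :
    x = (b * c / (r - b)) • v := by
  have collected : (r - b) • x = (b * c) • v := by
    rw [sub_smul, h]
    module
  rw [div_eq_inv_mul, mul_smul, eq_inv_smul_iff₀ (sub_ne_zero.mpr hrb), collected]

theorem complementary_function_sliding_case_general {E : Type*} [SeminormedAddCommGroup E]
    [NormedSpace ℝ E] {b c : ℝ} (hc : 0 < c) (hb : 0 < b) {lamτ v w : E}
    (hw : w = -lamτ + c • v) (hwb : b < ‖w‖)
    (hC : max b ‖w‖ • (-lamτ) - max 0 b • w = 0) :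
    ‖lamτ‖ = b ∧ lamτ = -(b * c / (‖w‖ - b)) • v ∧ ∃ ζ : ℝ, 0 < ζ ∧ lamτ = -ζ • v := by
  have balance : ‖w‖ • (-lamτ) = b • w := by
    rwa [max_eq_right hwb.le, max_eq_right hb.le, sub_eq_zero] at hC
  have norm_traction : ‖lamτ‖ = b := by
    rw [← norm_neg, norm_eq_abs_of_norm_smul_eq_smul (hb.trans hwb).ne' balance, abs_of_pos hb]
  have traction_eq : lamτ = -(b * c / (‖w‖ - b)) • v := by
    rw [neg_smul, ← neg_eq_iff_eq_neg]
    exact eq_div_smul_of_smul_eq_smul_add hwb.ne' (balance.trans (congrArg (b • ·) hw))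
  have coefficient_pos : 0 < b * c / (‖w‖ - b) := div_pos (mul_pos hb hc) (sub_pos.mpr hwb)
  exact ⟨norm_traction, traction_eq, _, coefficient_pos, traction_eq⟩

/-- Sliding case: if `‖w‖ > b` and the tangential complementary function `C_τ`
vanishes, then the tangential traction is at the friction bound and is antiparallel to
the sliding velocity. -/
theorem complementary_function_sliding_case
    (n : ℕ) (hn : 1 ≤ n) (c : ℝ) (hc : 0 < c)
    (b : ℝ) (hb : 0 < b) (lamτ v : EuclideanSpace ℝ (Fin n))
    (w : EuclideanSpace ℝ (Fin n)) (hw : w = -lamτ + c • v)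
    (hwb : b < ‖w‖)
    (hC : max b ‖w‖ • (-lamτ) - max 0 b • w = 0) :
    ‖lamτ‖ = b ∧ lamτ = -(b * c / (‖w‖ - b)) • v ∧ ∃ ζ : ℝ, 0 < ζ ∧ lamτ = -ζ • v :=
  complementary_function_sliding_case_general hc hb hw hwb hC
end

section
/- Let n ≥ 1, let ℝⁿ carry the Euclidean norm ‖·‖, and let F > 0, c > 0 be real constants. Let λ_n, u_n, g be real numbers and λ_τ, v ∈ ℝⁿ. Set b := F·(−λ_n + c·(u_n − g)), w := −λ_τ + c·v, C_n := −λ_n − (1/F)·max{0, b}, and C_τ := max{b, ‖w‖}·(−λ_τ) − max{0, b}·w. Assume b > 0. Then C_n = 0 and C_τ = 0 if and only if all of the following hold: u_n = g, λ_n = −b/F (so λ_n < 0), and either (v = 0 and ‖λ_τ‖ ≤ F·|λ_n|) or (there exists ζ > 0 with λ_τ = −ζ·v and ‖λ_τ‖ = F·|λ_n|). -/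
/-!
The equation `C_τ = 0` says that `t = -λ_τ` is the radial projection of `w = t + c • v` onto the
closed ball of radius `b`. If `‖w‖ ≤ b`, the projection fixes `w`, so `v = 0` (stick). If `b < ‖w‖`,
then `t` lies on the sphere of radius `b` and `w` is a multiple of `t` by a factor larger than `1`,
so `v` is a positive multiple of `t` (slip). The equation `C_n = 0` reads `F * λ_n = -b`; by the
definition of `b` this means `u_n = g`, and it identifies `b` with the Coulomb bound `F * |λ_n|`.
-/

section RadialProjection

variable {E : Type*} [SeminormedAddCommGroup E] [NormedSpace ℝ E] {b : ℝ} {t d : E}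

theorem norm_add_smul_self_of_nonneg {s : ℝ} (hs : 0 ≤ s) (t : E) :
    ‖t + s • t‖ = (1 + s) * ‖t‖ := by
  rw [(SameRay.sameRay_nonneg_smul_right t hs).norm_add, norm_smul_of_nonneg hs, one_add_mul]

theorem max_norm_smul_eq_smul_add_iff_of_norm_le (hb : 0 < b) (hle : ‖t + d‖ ≤ b) :
    max b ‖t + d‖ • t = b • (t + d) ↔ d = 0 := by
  rw [max_eq_left hle, smul_right_inj hb.ne', left_eq_add]

theorem max_norm_smul_eq_smul_add_iff_of_lt_norm (hb : 0 < b) (hlt : b < ‖t + d‖) :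
    max b ‖t + d‖ • t = b • (t + d) ↔ (∃ s : ℝ, 0 < s ∧ d = s • t) ∧ ‖t‖ = b := by
  rw [max_eq_right hlt.le]
  constructor
  · intro h
    have norm_eq : ‖t + d‖ * ‖t‖ = ‖t + d‖ * b := by
      simpa only [norm_smul, norm_norm, Real.norm_of_nonneg hb.le, mul_comm b] using congrArg norm h
    have smul_d : b • d = (‖t + d‖ - b) • t := by
      rw [sub_smul, h, smul_add, add_sub_cancel_left]
    refine ⟨⟨b⁻¹ * (‖t + d‖ - b), mul_pos (inv_pos.2 hb) (sub_pos.2 hlt), ?_⟩,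
      mul_left_cancel₀ (hb.trans hlt).ne' norm_eq⟩
    rw [mul_smul, ← smul_d, inv_smul_smul₀ hb.ne']
  · rintro ⟨⟨s, hs, rfl⟩, ht⟩
    rw [norm_add_smul_self_of_nonneg hs.le, ht]
    module

theorem max_norm_smul_eq_smul_add_iff (hb : 0 < b) :
    max b ‖t + d‖ • t = b • (t + d) ↔
      (d = 0 ∧ ‖t‖ ≤ b) ∨ ((∃ s : ℝ, 0 < s ∧ d = s • t) ∧ ‖t‖ = b) := by
  rcases le_or_gt ‖t + d‖ b with hle | hlt
  · have not_slip : ¬((∃ s : ℝ, 0 < s ∧ d = s • t) ∧ ‖t‖ = b) := by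
      rintro ⟨⟨s, hs, rfl⟩, ht⟩
      rw [norm_add_smul_self_of_nonneg hs.le, ht] at hle
      linarith [mul_pos hs hb]
    have norm_le_of_stick : d = 0 → ‖t‖ ≤ b := by
      rintro rfl
      rwa [add_zero] at hle
    rw [max_norm_smul_eq_smul_add_iff_of_norm_le hb hle, or_iff_left not_slip,
      and_iff_left_of_imp norm_le_of_stick]
  · have not_stick : ¬(d = 0 ∧ ‖t‖ ≤ b) := by
      rintro ⟨rfl, ht⟩
      rw [add_zero] at hlt
      exact hlt.not_ge ht
    rw [max_norm_smul_eq_smul_add_iff_of_lt_norm hb hlt, or_iff_right not_stick]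

end RadialProjection

theorem exists_pos_smul_eq_smul_iff {K M : Type*} [Field K] [LinearOrder K] [IsStrictOrderedRing K]
    [AddCommGroup M] [Module K M] {c : K} (hc : 0 < c) {x y : M} :
    (∃ s : K, 0 < s ∧ c • y = s • x) ↔ ∃ r : K, 0 < r ∧ x = r • y := by
  constructor
  · rintro ⟨s, hs, h⟩
    exact ⟨s⁻¹ * c, mul_pos (inv_pos.2 hs) hc, by rw [mul_smul, h, inv_smul_smul₀ hs.ne']⟩
  · rintro ⟨r, hr, rfl⟩
    exact ⟨c * r⁻¹, mul_pos hc (inv_pos.2 hr), by rw [mul_smul, inv_smul_smul₀ hr.ne']⟩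

theorem tangential_complementary_function_eq_zero_iff {E : Type*} [SeminormedAddCommGroup E]
    [NormedSpace ℝ E] {b c : ℝ} (hb : 0 < b) (hc : 0 < c) (lamτ v : E) :
    max b ‖-lamτ + c • v‖ • (-lamτ) - max 0 b • (-lamτ + c • v) = 0 ↔
      (v = 0 ∧ ‖lamτ‖ ≤ b) ∨ ((∃ ζ : ℝ, 0 < ζ ∧ lamτ = -ζ • v) ∧ ‖lamτ‖ = b) := by
  rw [max_eq_right hb.le, sub_eq_zero, max_norm_smul_eq_smul_add_iff hb,
    exists_pos_smul_eq_smul_iff hc]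
  simp only [smul_eq_zero_iff_right hc.ne', norm_neg, neg_eq_iff_eq_neg, neg_smul]

theorem normal_complementary_function_eq_zero_iff {K : Type*} [Field K] [LinearOrder K]
    {F b : K} (hb : 0 ≤ b) (lamn : K) :
    -lamn - (1 / F) * max 0 b = 0 ↔ lamn = -b / F := by
  rw [max_eq_right hb, sub_eq_zero, one_div_mul_eq_div, neg_eq_iff_eq_neg, neg_div]

theorem normal_traction_eq_neg_friction_bound_div_iff {K : Type*} [Field K] {F c : K} (hF : F ≠ 0)
    (hc : c ≠ 0) (lamn un g : K) :
    lamn = -(F * (-lamn + c * (un - g))) / F ↔ un = g := by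
  rw [← mul_neg, mul_div_cancel_left₀ _ hF, neg_add, neg_neg, left_eq_add, neg_eq_zero,
    mul_eq_zero_iff_left hc, sub_eq_zero]

theorem mul_abs_neg_div_cancel {K : Type*} [Field K] [LinearOrder K] [IsStrictOrderedRing K]
    {F b : K} (hF : 0 < F) (hb : 0 ≤ b) : F * |-b / F| = b := by
  rw [abs_div, abs_neg, abs_of_nonneg hb, abs_of_pos hF, mul_div_cancel₀ _ hF.ne']

theorem complementary_functions_iff_active_contact_general
    {E : Type*} [SeminormedAddCommGroup E] [NormedSpace ℝ E] (F c : ℝ) (hF : 0 < F) (hc : 0 < c)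
    (lamn un g : ℝ) (lamτ v : E)
    (b : ℝ) (hb : b = F * (-lamn + c * (un - g)))
    (w : E) (hw : w = -lamτ + c • v)
    (hbpos : 0 < b) :
    ((-lamn - (1 / F) * max 0 b = 0) ∧
        (max b ‖w‖ • (-lamτ) - max 0 b • w = 0)) ↔
      (un = g ∧ lamn = -b / F ∧
        ((v = 0 ∧ ‖lamτ‖ ≤ F * |lamn|) ∨
          ((∃ ζ : ℝ, 0 < ζ ∧ lamτ = -ζ • v) ∧ ‖lamτ‖ = F * |lamn|))) := by
  have contact : lamn = -b / F ↔ un = g := by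
    rw [hb]
    exact normal_traction_eq_neg_friction_bound_div_iff hF.ne' hc.ne' lamn un g
  have coulomb_bound (h : lamn = -b / F) : F * |lamn| = b := by
    rw [h, mul_abs_neg_div_cancel hF hbpos.le]
  rw [hw, normal_complementary_function_eq_zero_iff hbpos.le,
    tangential_complementary_function_eq_zero_iff hbpos hc, ← contact, and_self_left]
  exact and_congr_right fun h => by rw [coulomb_bound h]

/-- In the case of active contact (positive friction bound `b`), the complementary
functions `C_n` and `C_τ` both vanish if and only if contact holds (`u_n = g`,
`λ_n = -b/F < 0`) and either the subface is sticking (`v = 0` with the tangential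
traction within the friction bound) or sliding (tangential traction antiparallel to `v`
and at the friction bound). -/
theorem complementary_functions_iff_active_contact
    (n : ℕ) (hn : 1 ≤ n) (F c : ℝ) (hF : 0 < F) (hc : 0 < c)
    (lamn un g : ℝ) (lamτ v : EuclideanSpace ℝ (Fin n))
    (b : ℝ) (hb : b = F * (-lamn + c * (un - g)))
    (w : EuclideanSpace ℝ (Fin n)) (hw : w = -lamτ + c • v)
    (hbpos : 0 < b) :
    ((-lamn - (1 / F) * max 0 b = 0) ∧
        (max b ‖w‖ • (-lamτ) - max 0 b • w = 0)) ↔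
      (un = g ∧ lamn = -b / F ∧
        ((v = 0 ∧ ‖lamτ‖ ≤ F * |lamn|) ∨
          ((∃ ζ : ℝ, 0 < ζ ∧ lamτ = -ζ • v) ∧ ‖lamτ‖ = F * |lamn|))) :=
  complementary_functions_iff_active_contact_general F c hF hc lamn un g lamτ v b hb w hw hbpos
end

section
/- Let n ≥ 1, let ℝⁿ carry the Euclidean norm ‖·‖ and inner product ⟨·,·⟩, and let c > 0 be a real constant. Let b > 0 be real and λ_τ, v ∈ ℝⁿ with λ_τ ≠ 0 and ‖λ_τ‖ ≤ b. Set w := −λ_τ + c·v. Suppose either v = 0, or there exists ζ > 0 with λ_τ = −ζ·v. Then w ≠ 0, and: (i) α := ⟨−λ_τ, w⟩/(‖λ_τ‖·‖w‖) = 1; (ii) consequently the regularization parameter β, defined as β := 1/(1 − α·δ) if α < 0 and β := 1 otherwise (for any real δ), equals 1; and (iii) the regularized matrix Q̃ := (−λ_τ)·wᵀ/(max{b, ‖λ_τ‖}·‖w‖) coincides with the unregularized matrix Q := (−λ_τ)·wᵀ/(b·‖w‖). -/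
open scoped RealInnerProductSpace

/-!
In both friction regimes `-λ_τ` and `v` lie on a common ray, hence so does
`w = -λ_τ + c v`, which is nonzero. Two nonzero vectors on a common ray are the equality case of
Cauchy–Schwarz, so `α = 1`; in particular `α` is not negative, and `β = 1`. The bound `‖λ_τ‖ ≤ b`
makes the maximum in `Q̃` equal to `b`.
-/

section SameRay

variable {R M : Type*} [CommRing R] [PartialOrder R] [IsStrictOrderedRing R]
  [AddCommGroup M] [Module R M] {x y : M}

theorem sameRay_neg_left_of_eq_zero_or_eq_neg_smul
    (h : y = 0 ∨ ∃ ζ : R, 0 < ζ ∧ x = -ζ • y) : SameRay R (-x) y := by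
  rcases h with rfl | ⟨ζ, hζ, rfl⟩
  · exact SameRay.zero_right (-x)
  · rw [neg_smul, neg_neg]
    exact SameRay.sameRay_pos_smul_left y hζ

theorem add_ne_zero_of_sameRay [IsDomain R] [Module.IsTorsionFree R M]
    (h : SameRay R x y) (hx : x ≠ 0) : x + y ≠ 0 := by
  intro hxy
  obtain rfl : y = -x := eq_neg_of_add_eq_zero_right hxy
  exact hx (eq_zero_of_sameRay_self_neg h)

end SameRay

theorem real_inner_div_norm_mul_norm_eq_one_iff_sameRay {E : Type*} [NormedAddCommGroup E]
    [InnerProductSpace ℝ E] {x y : E} (hx : x ≠ 0) (hy : y ≠ 0) :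
    ⟪x, y⟫ / (‖x‖ * ‖y‖) = 1 ↔ SameRay ℝ x y := by
  rw [real_inner_div_norm_mul_norm_eq_one_iff, and_iff_right hx,
    ← exists_pos_left_iff_sameRay hx hy]
  simp only [eq_comm]

/-- At any pair satisfying the Coulomb friction conditions (sticking, or sliding with
tangential traction antiparallel to the velocity) with `λ_τ ≠ 0` and `‖λ_τ‖ ≤ b`, the
regularization of the semismooth Newton method is inactive: `w ≠ 0`, `α = 1`,
the regularization scaling `β` equals `1` (for any `δ`), and the regularized matrix
`Q̃` coincides with the unregularized matrix `Q`. -/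
theorem regularization_inactive_at_friction_solution
    (n : ℕ) (hn : 1 ≤ n) (c : ℝ) (hc : 0 < c)
    (b : ℝ) (hb : 0 < b) (lamτ v : EuclideanSpace ℝ (Fin n))
    (hlam : lamτ ≠ 0) (hlamb : ‖lamτ‖ ≤ b)
    (w : EuclideanSpace ℝ (Fin n)) (hw : w = -lamτ + c • v)
    (hcase : v = 0 ∨ ∃ ζ : ℝ, 0 < ζ ∧ lamτ = -ζ • v)
    (α : ℝ) (hα : α = ⟪-lamτ, w⟫ / (‖lamτ‖ * ‖w‖))
    (β : ℝ → ℝ) (hβ : ∀ δ : ℝ, β δ = if α < 0 then 1 / (1 - α * δ) else 1)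
    (Q Qreg : Matrix (Fin n) (Fin n) ℝ)
    (hQ : Q = (1 / (b * ‖w‖)) •
      Matrix.vecMulVec (fun i => (-lamτ) i) (fun j => w j))
    (hQreg : Qreg = (1 / (max b ‖lamτ‖ * ‖w‖)) •
      Matrix.vecMulVec (fun i => (-lamτ) i) (fun j => w j)) :
    w ≠ 0 ∧ α = 1 ∧ (∀ δ : ℝ, β δ = 1) ∧ Qreg = Q := by
  have hneg : -lamτ ≠ 0 := neg_ne_zero.mpr hlam
  have hray : SameRay ℝ (-lamτ) (c • v) :=
    (sameRay_neg_left_of_eq_zero_or_eq_neg_smul hcase).pos_smul_right hc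
  have hw0 : w ≠ 0 := hw ▸ add_ne_zero_of_sameRay hray hneg
  have hrayw : SameRay ℝ (-lamτ) w := hw ▸ SameRay.rfl.add_right hray
  have hα1 : α = 1 := by
    rw [hα, ← norm_neg lamτ]
    exact (real_inner_div_norm_mul_norm_eq_one_iff_sameRay hneg hw0).mpr hrayw
  have hα_not_neg : ¬ α < 0 := by rw [hα1]; exact zero_le_one.not_gt
  refine ⟨hw0, hα1, fun δ => ?_, ?_⟩
  · rw [hβ, if_neg hα_not_neg]
  · rw [hQreg, hQ, max_eq_left hlamb]
end

section
/- Let n ≥ 1, let ℝⁿ carry the Euclidean norm ‖·‖, and let c > 0 be a real constant. Let v ∈ ℝⁿ with v ≠ 0, let ζ > 0, set λ_τ := −ζ·v, and set b := ‖λ_τ‖ = ζ·‖v‖ (so b > 0). Set w := −λ_τ + c·v, Q := (−λ_τ)·wᵀ/(b·‖w‖), e := b/‖w‖, and M := e·(I − Q), where I is the n × n identity matrix. Then I − M is invertible, and the matrix L := c·((I − M)⁻¹ − I) satisfies L = ζ·(I − v·vᵀ/‖v‖²). In particular, L is symmetric and positive semidefinite, L·v = 0, and L·x = ζ·x for every x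 orthogonal to v. -/
open scoped RealInnerProductSpace
open Matrix

/-!
At a converged sliding state `-λ_τ`, `w` and `v` point in the same direction, so `Q` is the
orthogonal projection onto the line spanned by `v` and `e = ζ / (ζ + c)`. Hence `M = e • p` for
the complementary projection `p = 1 - Q`, and idempotency of `p` gives
`(1 - e • p)⁻¹ = 1 + (e / (1 - e)) • p = 1 + (ζ / c) • p`, that is, `L = ζ • p`.
-/

theorem one_sub_smul_mul_one_add_smul_of_isIdempotentElem {R A : Type*} [CommRing R] [Ring A]
    [Algebra R A] {p : A} (hp : IsIdempotentElem p) {r s : R} (hrs : s - r = r * s) :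
    (1 - r • p) * (1 + s • p) = 1 := by
  have expand : (1 - r • p) * (1 + s • p) = 1 + (s - r) • p - (r * s) • p := by
    rw [sub_mul, one_mul, mul_add, mul_one, smul_mul_smul_comm, hp.eq, sub_smul]
    abel
  rw [expand, hrs, add_sub_cancel_right]

theorem one_sub_div_smul_mul_one_add_div_smul_of_isIdempotentElem {K A : Type*} [Field K] [Ring A]
    [Algebra K A] {p : A} (hp : IsIdempotentElem p) {ζ c : K} (hc : c ≠ 0) (hζc : ζ + c ≠ 0) :
    (1 - (ζ / (ζ + c)) • p) * (1 + (ζ / c) • p) = 1 :=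
  one_sub_smul_mul_one_add_smul_of_isIdempotentElem hp (by field_simp; ring)

theorem smul_inv_one_sub_div_smul_sub_one_of_isIdempotentElem {ι K : Type*} [Fintype ι]
    [DecidableEq ι] [Field K] {p : Matrix ι ι K} (hp : IsIdempotentElem p) {ζ c : K}
    (hc : c ≠ 0) (hζc : ζ + c ≠ 0) :
    c • ((1 - (ζ / (ζ + c)) • p)⁻¹ - 1) = ζ • p := by
  rw [Matrix.inv_eq_right_inv
      (one_sub_div_smul_mul_one_add_div_smul_of_isIdempotentElem hp hc hζc),
    add_sub_cancel_left, smul_smul, mul_div_cancel₀ ζ hc]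

theorem posSemidef_of_isStarProjection {ι R : Type*} [Fintype ι] [Ring R] [PartialOrder R]
    [StarRing R] [StarOrderedRing R] {p : Matrix ι ι R} (hp : IsStarProjection p) :
    p.PosSemidef := by
  have conjTranspose_mul_self_eq : pᴴ * p = p := by
    rw [← star_eq_conjTranspose, hp.isSelfAdjoint.star_eq, hp.isIdempotentElem.eq]
  exact conjTranspose_mul_self_eq ▸ posSemidef_conjTranspose_mul_self p

theorem norm_smul_div_norm_smul {E : Type*} [NormedAddCommGroup E] [NormedSpace ℝ E] {v : E}
    (hv : v ≠ 0) {s t : ℝ} (hs : 0 ≤ s) (ht : 0 ≤ t) : ‖s • v‖ / ‖t • v‖ = s / t := by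
  rw [norm_smul_of_nonneg hs, norm_smul_of_nonneg ht, mul_div_mul_right _ _ (norm_ne_zero_iff.2 hv)]

/-- The matrix `v v* / (v* v)` of the orthogonal projection onto the line spanned by `v`. Since
`0⁻¹ = 0`, it is the zero matrix when `v* v = 0`. -/
def lineProjection {ι K : Type*} [Fintype ι] [Field K] [StarRing K] (v : ι → K) : Matrix ι ι K :=
  (star v ⬝ᵥ v)⁻¹ • vecMulVec v (star v)

section LineProjection

variable {ι K : Type*} [Fintype ι] [Field K] [StarRing K]

theorem isStarProjection_lineProjection (v : ι → K) : IsStarProjection (lineProjection v) where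
  isIdempotentElem := by
    have inv_mul_inv_mul : (star v ⬝ᵥ v)⁻¹ * (star v ⬝ᵥ v)⁻¹ * (star v ⬝ᵥ v) = (star v ⬝ᵥ v)⁻¹ := by
      simpa only [inv_inv] using mul_self_mul_inv (star v ⬝ᵥ v)⁻¹
    rw [IsIdempotentElem, lineProjection, smul_mul_smul_comm, vecMulVec_mul_vecMulVec,
      vecMulVec_smul, smul_smul, inv_mul_inv_mul]
  isSelfAdjoint := by
    rw [IsSelfAdjoint, lineProjection, star_eq_conjTranspose, conjTranspose_smul,
      conjTranspose_vecMulVec, star_star, star_inv₀, ← star_dotProduct_star, star_star]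

theorem lineProjection_mulVec (v x : ι → K) :
    lineProjection v *ᵥ x = ((star v ⬝ᵥ v)⁻¹ * (star v ⬝ᵥ x)) • v := by
  rw [lineProjection, smul_mulVec, vecMulVec_mulVec, op_smul_eq_smul, smul_smul]

variable [DecidableEq ι]

theorem one_sub_lineProjection_mulVec_self {v : ι → K} (hv : star v ⬝ᵥ v ≠ 0) :
    (1 - lineProjection v) *ᵥ v = 0 := by
  rw [sub_mulVec, one_mulVec, lineProjection_mulVec, inv_mul_cancel₀ hv, one_smul, sub_self]

theorem one_sub_lineProjection_mulVec_of_dotProduct_eq_zero {v x : ι → K}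
    (hx : star v ⬝ᵥ x = 0) : (1 - lineProjection v) *ᵥ x = x := by
  rw [sub_mulVec, one_mulVec, lineProjection_mulVec, hx, mul_zero, zero_smul, sub_zero]

end LineProjection

section EuclideanSpace

variable {ι : Type*} [Fintype ι]

theorem star_ofLp_dotProduct_ofLp (x y : EuclideanSpace ℝ ι) :
    star x.ofLp ⬝ᵥ y.ofLp = ⟪x, y⟫ := by
  rw [EuclideanSpace.inner_eq_star_dotProduct, dotProduct_comm]

theorem lineProjection_ofLp (v : EuclideanSpace ℝ ι) :
    lineProjection v.ofLp = (1 / ‖v‖ ^ 2) • vecMulVec v.ofLp v.ofLp := by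
  rw [lineProjection, star_ofLp_dotProduct_ofLp, real_inner_self_eq_norm_sq, one_div, star_trivial]

theorem vecMulVec_smul_smul_div_norms_eq_lineProjection (v : EuclideanSpace ℝ ι) {s t : ℝ}
    (hst : 0 < s * t) :
    (1 / (‖s • v‖ * ‖t • v‖)) • vecMulVec (s • v).ofLp (t • v).ofLp = lineProjection v.ofLp := by
  have norm_mul_norm : ‖s • v‖ * ‖t • v‖ = s * t * ‖v‖ ^ 2 := by
    rw [norm_smul, norm_smul, mul_mul_mul_comm, ← norm_mul, Real.norm_of_nonneg hst.le, sq]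
  rw [norm_mul_norm, WithLp.ofLp_smul, WithLp.ofLp_smul, smul_vecMulVec, vecMulVec_smul,
    smul_smul, smul_smul, lineProjection_ofLp, mul_assoc, one_div_mul_eq_div,
    div_mul_cancel_left₀ hst.ne', one_div]

variable [DecidableEq ι]

theorem robin_weight_matrix_at_converged_sliding_state_general {c : ℝ} (hc : c ≠ 0)
    {v : EuclideanSpace ℝ ι} (hv : v ≠ 0) {ζ : ℝ} (hζ : 0 < ζ) (hζc : 0 < ζ + c)
    {lamτ : EuclideanSpace ℝ ι} (hlam : lamτ = -ζ • v) {b : ℝ} (hb : b = ‖lamτ‖)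
    {w : EuclideanSpace ℝ ι} (hw : w = -lamτ + c • v) {Q : Matrix ι ι ℝ}
    (hQ : Q = (1 / (b * ‖w‖)) • vecMulVec (-lamτ).ofLp w.ofLp)
    {e : ℝ} (he : e = b / ‖w‖) {M : Matrix ι ι ℝ} (hM : M = e • (1 - Q))
    {L : Matrix ι ι ℝ} (hL : L = c • ((1 - M)⁻¹ - 1)) :
    IsUnit (1 - M) ∧
      L = ζ • (1 - (1 / ‖v‖ ^ 2) • vecMulVec v.ofLp v.ofLp) ∧
      L.IsSymm ∧ L.PosSemidef ∧
      L *ᵥ v.ofLp = 0 ∧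
      ∀ x : EuclideanSpace ℝ ι, ⟪x, v⟫ = 0 → L *ᵥ x.ofLp = ζ • x.ofLp := by
  have neg_lam_eq : -lamτ = ζ • v := by rw [hlam, neg_smul, neg_neg]
  have w_eq : w = (ζ + c) • v := by rw [hw, neg_lam_eq, add_smul]
  have b_eq : b = ‖ζ • v‖ := by rw [hb, ← neg_lam_eq, norm_neg]
  have Q_eq : Q = lineProjection v.ofLp := by
    rw [hQ, neg_lam_eq, w_eq, b_eq,
      vecMulVec_smul_smul_div_norms_eq_lineProjection v (mul_pos hζ hζc)]
  have e_eq : e = ζ / (ζ + c) := by rw [he, b_eq, w_eq, norm_smul_div_norm_smul hv hζ.le hζc.le]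
  have hp : IsStarProjection (1 - lineProjection v.ofLp) :=
    (isStarProjection_lineProjection v.ofLp).one_sub
  rw [Q_eq, e_eq] at hM
  have L_eq : L = ζ • (1 - lineProjection v.ofLp) := by
    rw [hL, hM, smul_inv_one_sub_div_smul_sub_one_of_isIdempotentElem hp.isIdempotentElem hc
      hζc.ne']
  have L_posSemidef : L.PosSemidef := L_eq ▸ (posSemidef_of_isStarProjection hp).smul hζ.le
  refine ⟨?_, by rw [L_eq, lineProjection_ofLp], ?_, L_posSemidef, ?_, fun x hx => ?_⟩
  · rw [hM]
    exact .of_mul_eq_one _ (one_sub_div_smul_mul_one_add_div_smul_of_isIdempotentElem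
      hp.isIdempotentElem hc hζc.ne')
  · rw [IsSymm, ← conjTranspose_eq_transpose_of_trivial, L_posSemidef.isHermitian.eq]
  · have v_dotProduct_self : star v.ofLp ⬝ᵥ v.ofLp ≠ 0 := by
      rwa [star_ofLp_dotProduct_ofLp, inner_self_ne_zero]
    rw [L_eq, smul_mulVec, one_sub_lineProjection_mulVec_self v_dotProduct_self, smul_zero]
  · have v_dotProduct_x : star v.ofLp ⬝ᵥ x.ofLp = 0 := by
      rw [star_ofLp_dotProduct_ofLp, real_inner_comm, hx]
    rw [L_eq, smul_mulVec, one_sub_lineProjection_mulVec_of_dotProduct_eq_zero v_dotProduct_x]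

end EuclideanSpace

/-- Explicit form of the Robin-weight matrix `L = c((I - M)⁻¹ - I)` of the semismooth
Newton update at a converged sliding state: `I - M` is invertible and
`L = ζ (I - v vᵀ / ‖v‖²)`; in particular `L` is symmetric positive semidefinite,
`L v = 0`, and `L x = ζ x` for every `x` orthogonal to `v`. -/
theorem robin_weight_matrix_at_converged_sliding_state
    (n : ℕ) (hn : 1 ≤ n) (c : ℝ) (hc : 0 < c)
    (v : EuclideanSpace ℝ (Fin n)) (hv : v ≠ 0)
    (ζ : ℝ) (hζ : 0 < ζ)
    (lamτ : EuclideanSpace ℝ (Fin n)) (hlam : lamτ = -ζ • v)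
    (b : ℝ) (hb : b = ‖lamτ‖)
    (w : EuclideanSpace ℝ (Fin n)) (hw : w = -lamτ + c • v)
    (Q : Matrix (Fin n) (Fin n) ℝ)
    (hQ : Q = (1 / (b * ‖w‖)) •
      Matrix.vecMulVec (fun i => (-lamτ) i) (fun j => w j))
    (e : ℝ) (he : e = b / ‖w‖)
    (M : Matrix (Fin n) (Fin n) ℝ) (hM : M = e • ((1 : Matrix (Fin n) (Fin n) ℝ) - Q))
    (L : Matrix (Fin n) (Fin n) ℝ)
    (hL : L = c • (((1 : Matrix (Fin n) (Fin n) ℝ) - M)⁻¹ -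
      (1 : Matrix (Fin n) (Fin n) ℝ))) :
    IsUnit ((1 : Matrix (Fin n) (Fin n) ℝ) - M) ∧
      L = ζ • ((1 : Matrix (Fin n) (Fin n) ℝ) -
        (1 / ‖v‖ ^ 2) • Matrix.vecMulVec (fun i => v i) (fun j => v j)) ∧
      L.IsSymm ∧ L.PosSemidef ∧
      L *ᵥ (fun i => v i) = 0 ∧
      (∀ x : EuclideanSpace ℝ (Fin n), ⟪x, v⟫ = 0 →
        L *ᵥ (fun i => x i) = fun i => ζ * x i) := by
  exact robin_weight_matrix_at_converged_sliding_state_general hc.ne' hv hζ (add_pos hζ hc)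
    hlam hb hw hQ he hM hL
end

section
/- Let d ≥ 1 and let v_0, v_1, …, v_d be d + 1 affinely independent points in Euclidean space ℝᵈ. For each i ∈ {0, …, d}, let F_i be the convex hull of {v_j : j ≠ i} (the facet opposite v_i), let m_i be its (d−1)-dimensional Hausdorff measure, and let n_i ∈ ℝᵈ be the outward unit normal of F_i, i.e., the unit vector orthogonal to v_j − v_k for all j, k ≠ i and satisfying ⟨n_i, v_i − v_j⟩ < 0 for every j ≠ i. Then Σ_{i=0}^{d} m_i · n_i = 0. -/
open scoped MeasureTheory RealInnerProductSpace
open MeasureTheory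

/-!
Slicing a pyramid parallel to its base gives volume = height × base area / `d`. Viewing the simplex
as a pyramid over each of its facets `Fᵢ`, with height `hᵢ` and outward normal `nᵢ`, shows that
`hᵢ * area Fᵢ` is the same number `C` for all `i`. Since `⟪nᵢ, vₖ - vᵢ⟫ = hᵢ` for `k ≠ i`, the inner
product of `∑ᵢ area Fᵢ • nᵢ` with an edge `vₖ - vₗ` is `C - C = 0`, and the edges span the space.
-/

open Module Set AffineMap

lemma euclideanHausdorffMeasure_real_eq_mul {X : Type*} [EMetricSpace X] [MeasurableSpace X]
    [BorelSpace X] (k : ℕ) (s : Set X) :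
    (μHE[k] : Measure X).real s =
      Measure.addHaarScalarFactor (volume : Measure (EuclideanSpace ℝ (Fin k))) μH[k] *
        (μH[k] : Measure X).real s := by
  rw [Measure.euclideanHausdorffMeasure_def, measureReal_nnreal_smul_apply]

section Cone

lemma mem_convexJoin_singleton_iff_homothety {𝕜 E : Type*} [Field 𝕜] [LinearOrder 𝕜]
    [IsStrictOrderedRing 𝕜] [AddCommGroup E] [Module 𝕜 E] {p y : E} {S : Set E} :
    y ∈ convexJoin 𝕜 {p} S ↔ ∃ t ∈ Icc (0 : 𝕜) 1, ∃ z ∈ S, homothety p t z = y := by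
  simp only [mem_convexJoin, mem_singleton_iff, exists_eq_left, segment_eq_image_lineMap, mem_image,
    homothety_eq_lineMap]
  tauto

variable {V : Type*} [NormedAddCommGroup V] [InnerProductSpace ℝ V] {p w : V} {S : Set V} {x : ℝ}

lemma homothety_mem_mk'_orthogonal_iff (hw : w ≠ 0) {z : V}
    (hz : z ∈ AffineSubspace.mk' (w +ᵥ p) (ℝ ∙ w)ᗮ) (t : ℝ) :
    homothety p t z ∈ AffineSubspace.mk' (x • w +ᵥ p) (ℝ ∙ w)ᗮ ↔ t = x := by
  rw [AffineSubspace.mem_mk', Submodule.mem_orthogonal_singleton_iff_inner_right] at hz ⊢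
  have decomposition :
      homothety p t z -ᵥ (x • w +ᵥ p) = t • (z -ᵥ (w +ᵥ p)) + (t - x) • w := by
    simp only [homothety_apply, vsub_eq_sub, vadd_eq_add]
    module
  rw [decomposition, inner_add_right, inner_smul_right, hz, inner_smul_right]
  simp [hw, sub_eq_zero]

lemma convexJoin_inter_mk'_orthogonal (hw : w ≠ 0)
    (hS : S ⊆ AffineSubspace.mk' (w +ᵥ p) (ℝ ∙ w)ᗮ) (hx : x ∈ Icc (0 : ℝ) 1) :
    convexJoin ℝ {p} S ∩ AffineSubspace.mk' (x • w +ᵥ p) (ℝ ∙ w)ᗮ = homothety p x '' S := by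
  ext y
  rw [mem_inter_iff, mem_convexJoin_singleton_iff_homothety, SetLike.mem_coe]
  constructor
  · rintro ⟨⟨t, -, z, hz, rfl⟩, hy⟩
    exact ⟨z, hz, by rw [(homothety_mem_mk'_orthogonal_iff hw (hS hz) t).1 hy]⟩
  · rintro ⟨z, hz, rfl⟩
    exact ⟨⟨x, hx, z, hz, rfl⟩, (homothety_mem_mk'_orthogonal_iff hw (hS hz) x).2 rfl⟩

lemma convexJoin_inter_mk'_orthogonal_eq_empty (hw : w ≠ 0)
    (hS : S ⊆ AffineSubspace.mk' (w +ᵥ p) (ℝ ∙ w)ᗮ) (hx : x ∉ Icc (0 : ℝ) 1) :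
    convexJoin ℝ {p} S ∩ AffineSubspace.mk' (x • w +ᵥ p) (ℝ ∙ w)ᗮ = ∅ := by
  rw [eq_empty_iff_forall_notMem]
  rintro y ⟨hy, hyx⟩
  obtain ⟨t, ht, z, hz, rfl⟩ := mem_convexJoin_singleton_iff_homothety.1 hy
  exact hx ((homothety_mem_mk'_orthogonal_iff hw (hS hz) t).1 hyx ▸ ht)

variable [MeasurableSpace V] [BorelSpace V]

lemma euclideanHausdorffMeasure_convexJoin_inter_mk'_orthogonal (hw : w ≠ 0)
    (hS : S ⊆ AffineSubspace.mk' (w +ᵥ p) (ℝ ∙ w)ᗮ) (hx : x ≠ 0) (k : ℕ) :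
    μHE[k] (convexJoin ℝ {p} S ∩ AffineSubspace.mk' (x • w +ᵥ p) (ℝ ∙ w)ᗮ) =
      (Icc (0 : ℝ) 1).indicator (fun x ↦ ‖x‖ₑ ^ k * μHE[k] S) x := by
  by_cases hx01 : x ∈ Icc (0 : ℝ) 1
  · rw [convexJoin_inter_mk'_orthogonal hw hS hx01, indicator_of_mem hx01,
      euclideanHausdorffMeasure_homothety_image _ _ hx, ENNReal.smul_def, smul_eq_mul,
      ENNReal.coe_pow, enorm_eq_nnnorm]
  · rw [convexJoin_inter_mk'_orthogonal_eq_empty hw hS hx01, indicator_of_notMem hx01,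
      measure_empty]

lemma setLIntegral_Icc_enorm_pow (k : ℕ) :
    ∫⁻ x in Icc (0 : ℝ) 1, ‖x‖ₑ ^ k = ((k + 1 : ℕ) : ENNReal)⁻¹ := by
  have enorm_eq_ofReal : ∀ x ∈ Icc (0 : ℝ) 1, ‖x‖ₑ ^ k = ENNReal.ofReal (x ^ k) := fun x hx ↦ by
    rw [Real.enorm_eq_ofReal hx.1, ENNReal.ofReal_pow hx.1]
  rw [setLIntegral_congr_fun measurableSet_Icc enorm_eq_ofReal,
    ← ofReal_integral_eq_lintegral_ofReal ((continuous_pow k).integrableOn_Icc)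
      (ae_restrict_of_forall_mem measurableSet_Icc fun x hx ↦ pow_nonneg hx.1 k),
    integral_Icc_eq_integral_Ioc, ← intervalIntegral.integral_of_le zero_le_one, integral_pow,
    ← ENNReal.ofReal_natCast, ← ENNReal.ofReal_inv_of_pos (by positivity)]
  simp

theorem euclideanHausdorffMeasure_convexJoin_singleton [FiniteDimensional ℝ V] (hw : w ≠ 0)
    (hS : S ⊆ AffineSubspace.mk' (w +ᵥ p) (ℝ ∙ w)ᗮ) (hcone : MeasurableSet (convexJoin ℝ {p} S)) :
    μHE[finrank ℝ V] (convexJoin ℝ {p} S) =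
      ‖w‖ₑ * ((finrank ℝ V : ENNReal)⁻¹ * μHE[finrank ℝ V - 1] S) := by
  have finrank_pos : 0 < finrank ℝ V := finrank_pos_iff_exists_ne_zero.2 ⟨w, hw⟩
  have slice : ∀ᵐ x : ℝ, μHE[finrank ℝ V - 1]
      (convexJoin ℝ {p} S ∩ AffineSubspace.mk' (x • w +ᵥ p) (ℝ ∙ w)ᗮ) = _ :=
    (Measure.ae_ne volume 0).mono fun x hx ↦
      euclideanHausdorffMeasure_convexJoin_inter_mk'_orthogonal hw hS hx _
  rw [EuclideanGeometry.euclideanHausdorffMeasure_eq_lintegral p hw hcone, lintegral_congr_ae slice,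
    lintegral_indicator measurableSet_Icc, lintegral_mul_const _ (by fun_prop),
    setLIntegral_Icc_enorm_pow, Nat.sub_add_cancel finrank_pos]

end Cone

section Simplex

variable {ι V : Type*} [NormedAddCommGroup V] [InnerProductSpace ℝ V]

/-- The facet opposite the vertex `v i` of the simplex with vertices `v`. -/
abbrev oppositeFacet (v : ι → V) (i : ι) : Set V :=
  convexHull ℝ (v '' {j | j ≠ i})

/-- `n` is an outward unit normal of the facet opposite `v i` in the simplex with vertices `v`.
Being outward is expressed by `v i` lying strictly on the negative side of the facet. -/
structure IsOutwardUnitNormal (v : ι → V) (i : ι) (n : V) : Prop where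
  norm_eq_one : ‖n‖ = 1
  inner_sub_eq_zero : ∀ j k, j ≠ i → k ≠ i → ⟪n, v j - v k⟫ = 0
  inner_sub_neg : ∀ j, j ≠ i → ⟪n, v i - v j⟫ < 0

lemma IsOutwardUnitNormal.exists_height [Nontrivial ι] {v : ι → V} {i : ι} {n : V}
    (hn : IsOutwardUnitNormal v i n) : ∃ h > 0, ∀ j ≠ i, ⟪n, v j - v i⟫ = h := by
  obtain ⟨o, ho⟩ := exists_ne i
  refine ⟨⟪n, v o - v i⟫, ?_, fun j hj ↦ ?_⟩
  · rw [← neg_sub, inner_neg_right]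
    exact neg_pos.2 (hn.inner_sub_neg o ho)
  · rw [← sub_add_sub_cancel (v j) (v o), inner_add_right, hn.inner_sub_eq_zero j o hj ho, zero_add]

lemma convexJoin_oppositeFacet [Nontrivial ι] (v : ι → V) (i : ι) :
    convexJoin ℝ {v i} (oppositeFacet v i) = convexHull ℝ (range v) := by
  have range_eq : range v = insert (v i) (v '' {j | j ≠ i}) := by
    rw [← image_insert_eq, ← image_univ]
    congr 1
    ext j
    simp [em]
  have facet_nonempty : (v '' {j | j ≠ i}).Nonempty := .image v (exists_ne i)
  rw [range_eq, convexHull_insert facet_nonempty]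

lemma oppositeFacet_subset_mk'_orthogonal {v : ι → V} {i : ι} {n : V} {h : ℝ} (hn : ‖n‖ = 1)
    (hh : ∀ j ≠ i, ⟪n, v j - v i⟫ = h) :
    oppositeFacet v i ⊆ AffineSubspace.mk' (h • n +ᵥ v i) (ℝ ∙ (h • n))ᗮ := by
  refine convexHull_min ?_ (AffineSubspace.convex _)
  rintro _ ⟨j, hj, rfl⟩
  rw [SetLike.mem_coe, AffineSubspace.mem_mk',
    Submodule.mem_orthogonal_singleton_iff_inner_right, vsub_vadd_eq_vsub_sub, vsub_eq_sub,
    inner_smul_left, inner_sub_right, hh j hj, inner_smul_right, real_inner_self_eq_norm_sq, hn]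
  simp

lemma inner_sum_smul_sub_eq_zero [Fintype ι] {v n : ι → V} {h m : ι → ℝ} {C : ℝ}
    (hh : ∀ i, ∀ j ≠ i, ⟪n i, v j - v i⟫ = h i) (hC : ∀ i, h i * m i = C) (k l : ι) :
    ⟪∑ i, m i • n i, v k - v l⟫ = 0 := by
  classical
  have inner_vertex (i k : ι) : ⟪m i • n i, v k - v i⟫ = C - if i = k then C else 0 := by
    rw [real_inner_smul_left]
    split_ifs with hik
    · simp [hik]
    · rw [hh i k (Ne.symm hik), mul_comm, hC, sub_zero]
  calc ⟪∑ i, m i • n i, v k - v l⟫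
      = ∑ i, (⟪m i • n i, v k - v i⟫ - ⟪m i • n i, v l - v i⟫) := by
        simp only [sum_inner, ← inner_sub_right, sub_sub_sub_cancel_right]
    _ = 0 := by simp [inner_vertex]

lemma eq_zero_of_inner_sub_eq_zero {v : ι → V} (hv : vectorSpan ℝ (range v) = ⊤) {y : V}
    (hy : ∀ k l, ⟪y, v k - v l⟫ = 0) : y = 0 := by
  have edges_le : vectorSpan ℝ (range v) ≤ (ℝ ∙ y)ᗮ := by
    rw [vectorSpan, Submodule.span_le]
    rintro _ ⟨_, ⟨k, rfl⟩, _, ⟨l, rfl⟩, rfl⟩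
    exact Submodule.mem_orthogonal_singleton_iff_inner_right.2 (hy k l)
  have y_mem : y ∈ (ℝ ∙ y)ᗮ := edges_le (hv ▸ Submodule.mem_top)
  exact inner_self_eq_zero.1 (Submodule.mem_orthogonal_singleton_iff_inner_right.1 y_mem)

variable [MeasurableSpace V] [BorelSpace V] [FiniteDimensional ℝ V]

lemma height_mul_euclideanHausdorffMeasure_oppositeFacet [Finite ι] [Nontrivial ι] {v : ι → V}
    {i : ι} {n : V} {h : ℝ} (hn : ‖n‖ = 1) (hpos : 0 < h) (hh : ∀ j ≠ i, ⟪n, v j - v i⟫ = h) :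
    h * (μHE[finrank ℝ V - 1] : Measure V).real (oppositeFacet v i) =
      finrank ℝ V * (μHE[finrank ℝ V] : Measure V).real (convexHull ℝ (range v)) := by
  have altitude_ne_zero : h • n ≠ 0 :=
    smul_ne_zero hpos.ne' (norm_ne_zero_iff.1 (by simp [hn]))
  have finrank_ne_zero : (finrank ℝ V : ℝ) ≠ 0 :=
    Nat.cast_ne_zero.2 (finrank_pos_iff_exists_ne_zero.2 ⟨_, altitude_ne_zero⟩).ne'
  have simplex_measurable : MeasurableSet (convexJoin ℝ {v i} (oppositeFacet v i)) := by
    rw [convexJoin_oppositeFacet]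
    exact ((finite_range v).isClosed_convexHull (𝕜 := ℝ)).measurableSet
  have volume_eq := euclideanHausdorffMeasure_convexJoin_singleton altitude_ne_zero
    (oppositeFacet_subset_mk'_orthogonal hn hh) simplex_measurable
  rw [convexJoin_oppositeFacet] at volume_eq
  simp only [measureReal_def, volume_eq, ENNReal.toReal_mul, ENNReal.toReal_inv,
    ENNReal.toReal_natCast, toReal_enorm, norm_smul, hn, Real.norm_of_nonneg hpos.le]
  field_simp

theorem simplex_facet_normals_sum_zero_general [Fintype ι] [Nontrivial ι] {v n : ι → V}
    (hv : vectorSpan ℝ (range v) = ⊤) (hn : ∀ i, IsOutwardUnitNormal v i (n i)) :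
    ∑ i, (μH[(finrank ℝ V - 1 : ℕ)] : Measure V).real (oppositeFacet v i) • n i = 0 := by
  choose h hpos hh using fun i ↦ (hn i).exists_height
  let c := Measure.addHaarScalarFactor
    (volume : Measure (EuclideanSpace ℝ (Fin (finrank ℝ V - 1)))) μH[(finrank ℝ V - 1 : ℕ)]
  have c_ne_zero : (c : ℝ) ≠ 0 :=
    NNReal.coe_ne_zero.2 (Measure.addHaarScalarFactor_volume_hausdorffMeasure_ne_zero _)
  have height_mul_area (i : ι) :
      h i * (μH[(finrank ℝ V - 1 : ℕ)] : Measure V).real (oppositeFacet v i) =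
        finrank ℝ V * (μHE[finrank ℝ V] : Measure V).real (convexHull ℝ (range v)) / c := by
    rw [eq_div_iff c_ne_zero, mul_assoc, mul_comm _ (c : ℝ),
      ← euclideanHausdorffMeasure_real_eq_mul,
      height_mul_euclideanHausdorffMeasure_oppositeFacet (hn i).norm_eq_one (hpos i) (hh i)]
  exact eq_zero_of_inner_sub_eq_zero hv (inner_sum_smul_sub_eq_zero hh height_mul_area)

end Simplex

/-- Discrete Gauss (Minkowski) relation for a nondegenerate simplex: the sum over its
facets of the `(d-1)`-dimensional Hausdorff measure of the facet times its outward unit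
normal vector vanishes. -/
theorem simplex_facet_normals_sum_zero
    (d : ℕ) (hd : 1 ≤ d)
    (v : Fin (d + 1) → EuclideanSpace ℝ (Fin d))
    (hv : AffineIndependent ℝ v)
    (m : Fin (d + 1) → ℝ)
    (hm : ∀ i, m i =
      (μH[(d : ℝ) - 1] (convexHull ℝ (v '' {j | j ≠ i}))).toReal)
    (nvec : Fin (d + 1) → EuclideanSpace ℝ (Fin d))
    (hunit : ∀ i, ‖nvec i‖ = 1)
    (horth : ∀ i j k, j ≠ i → k ≠ i → ⟪nvec i, v j - v k⟫ = 0)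
    (hout : ∀ i j, j ≠ i → ⟪nvec i, v i - v j⟫ < 0) :
    ∑ i, m i • nvec i = 0 := by
  have : Nontrivial (Fin (d + 1)) := Fin.nontrivial_iff_two_le.2 (Nat.succ_le_succ hd)
  simpa [hm, measureReal_def, Nat.cast_sub hd] using simplex_facet_normals_sum_zero_general
    (hv.vectorSpan_eq_top_of_card_eq_finrank_add_one (by simp))
    fun i ↦ ⟨hunit i, horth i, hout i⟩
end
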